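/- For all w1, w2 ∈ H^1 one has S(w1 ш̄ w2) = S(w1) ш S(w2); that is, S is a ℚ-algebra isomorphism from (H^1, ш̄) to (H^1, ш). -/

import Mathlib

open scoped BigOperators

/-- The two-letter alphabet {x, y}. -/
inductive Letter : Type
  | x : Letter
  | y : Letter
deriving DecidableEq

/-- `H = ℚ⟨x,y⟩`, the noncommutative polynomial ring over ℚ in two
indeterminates, realized as the monoid algebra of the free monoid on `{x,y}`. -/
abbrev H : Type := MonoidAlgebra ℚ (FreeMonoid Letter)

namespace H

/-- The monomial (word) of `H` corresponding to an element of the free monoid. -/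
noncomputable def word (w : FreeMonoid Letter) : H := MonoidAlgebra.single w 1

/-- The generator `x`. -/
noncomputable def X : H := word (FreeMonoid.of Letter.x)

/-- The generator `y`. -/
noncomputable def Y : H := word (FreeMonoid.of Letter.y)

/-- The word `z_k = x^{k-1} y` (for `k ≥ 1`). -/
def zW (k : ℕ) : FreeMonoid Letter :=
  FreeMonoid.ofList (List.replicate (k - 1) Letter.x ++ [Letter.y])

/-- `z_k = x^{k-1} y` as an element of `H`. -/
noncomputable def z (k : ℕ) : H := word (zW k)

/-- A list `[k₁,…,kₙ]` gives the word `z_{k₁} z_{k₂} ⋯ z_{kₙ}`. -/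
def zListW (ks : List ℕ) : FreeMonoid Letter :=
  FreeMonoid.ofList (ks.flatMap fun k => List.replicate (k - 1) Letter.x ++ [Letter.y])

/-- `H¹ = ℚ + Hy` as a ℚ-submodule of `H`. -/
noncomputable def H1 : Submodule ℚ H :=
  LinearMap.range (LinearMap.mulRight ℚ Y) ⊔ Submodule.span ℚ {1}

/-- `H⁰ = ℚ + xHy` as a ℚ-submodule of `H`. -/
noncomputable def H0 : Submodule ℚ H :=
  LinearMap.range ((LinearMap.mulRight ℚ Y).comp (LinearMap.mulLeft ℚ X)) ⊔
    Submodule.span ℚ {1}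

/-- Parse a word of `H¹` into the exponent list of its `z`-decomposition:
`z_{k₁}⋯z_{kₙ} ↦ [k₁,…,kₙ]` (auxiliary accumulator version). -/
def toZAux : List Letter → ℕ → List ℕ
  | [], _ => []
  | Letter.x :: r, n => toZAux r (n + 1)
  | Letter.y :: r, n => (n + 1) :: toZAux r 0

/-- The `z`-decomposition of a word of `H¹`. -/
def toZ (w : FreeMonoid Letter) : List ℕ := toZAux (FreeMonoid.toList w) 0

/-- The harmonic product on words of `H¹` (via `z`-decompositions):
`1 * w = w * 1 = w` and
`z_k w₁ * z_l w₂ = z_k (w₁ * z_l w₂) + z_l (z_k w₁ * w₂) + z_{k+l} (w₁ * w₂)`. -/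
noncomputable def harmW : List ℕ → List ℕ → H
  | [], w => word (zListW w)
  | k :: w1, [] => word (zListW (k :: w1))
  | k :: w1, l :: w2 =>
      z k * harmW w1 (l :: w2) + z l * harmW (k :: w1) w2 + z (k + l) * harmW w1 w2
termination_by w1 w2 => w1.length + w2.length
decreasing_by all_goals simp [Nat.lt_succ_iff] <;> omega

/-- The n-harmonic product on words of `H¹`:
`1 *̄ w = w *̄ 1 = w` and
`z_k w₁ *̄ z_l w₂ = z_k (w₁ *̄ z_l w₂) + z_l (z_k w₁ *̄ w₂) − z_{k+l} (w₁ *̄ w₂)`. -/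
noncomputable def nharmW : List ℕ → List ℕ → H
  | [], w => word (zListW w)
  | k :: w1, [] => word (zListW (k :: w1))
  | k :: w1, l :: w2 =>
      z k * nharmW w1 (l :: w2) + z l * nharmW (k :: w1) w2 - z (k + l) * nharmW w1 w2
termination_by w1 w2 => w1.length + w2.length
decreasing_by all_goals simp [Nat.lt_succ_iff] <;> omega

/-- The harmonic product `*` on `H¹`, extended ℚ-bilinearly. -/
noncomputable def harm (a b : H) : H :=
  Finsupp.sum a.coeff fun w1 c1 =>
    Finsupp.sum b.coeff fun w2 c2 => (c1 * c2) • harmW (toZ w1) (toZ w2)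

/-- The n-harmonic product `*̄` on `H¹`, extended ℚ-bilinearly. -/
noncomputable def nharm (a b : H) : H :=
  Finsupp.sum a.coeff fun w1 c1 =>
    Finsupp.sum b.coeff fun w2 c2 => (c1 * c2) • nharmW (toZ w1) (toZ w2)

/-- The letter exchange `τ(x) = y`, `τ(y) = x`. -/
def τ : Letter → Letter
  | Letter.x => Letter.y
  | Letter.y => Letter.x

/-- `δ(w) = 1` if `w` is the empty word, `0` otherwise. -/
def δ : List Letter → ℚ
  | [] => 1
  | _ :: _ => 0

/-- The shuffle product on words:
`1 ш w = w ш 1 = w` and `u₁w₁ ш u₂w₂ = u₁(w₁ ш u₂w₂) + u₂(u₁w₁ ш w₂)`. -/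
noncomputable def shW : List Letter → List Letter → H
  | [], w => word (FreeMonoid.ofList w)
  | u :: w, [] => word (FreeMonoid.ofList (u :: w))
  | u1 :: w1, u2 :: w2 =>
      word (FreeMonoid.of u1) * shW w1 (u2 :: w2) +
        word (FreeMonoid.of u2) * shW (u1 :: w1) w2
termination_by w1 w2 => w1.length + w2.length
decreasing_by all_goals simp [Nat.lt_succ_iff]

/-- The n-shuffle product on words: `1 ш̄ w = w ш̄ 1 = w` and
`u₁w₁ ш̄ u₂w₂ = u₁(w₁ ш̄ u₂w₂) + u₂(u₁w₁ ш̄ w₂) − δ(w₁)τ(u₁)u₂w₂ − δ(w₂)τ(u₂)u₁w₁`. -/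
noncomputable def nshW : List Letter → List Letter → H
  | [], w => word (FreeMonoid.ofList w)
  | u :: w, [] => word (FreeMonoid.ofList (u :: w))
  | u1 :: w1, u2 :: w2 =>
      word (FreeMonoid.of u1) * nshW w1 (u2 :: w2) +
        word (FreeMonoid.of u2) * nshW (u1 :: w1) w2 -
        δ w1 • word (FreeMonoid.ofList (τ u1 :: u2 :: w2)) -
        δ w2 • word (FreeMonoid.ofList (τ u2 :: u1 :: w1))
termination_by w1 w2 => w1.length + w2.length
decreasing_by all_goals simp [Nat.lt_succ_iff]

/-- The shuffle product `ш` on `H`, extended ℚ-bilinearly. -/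
noncomputable def sh (a b : H) : H :=
  Finsupp.sum a.coeff fun w1 c1 =>
    Finsupp.sum b.coeff fun w2 c2 =>
      (c1 * c2) • shW (FreeMonoid.toList w1) (FreeMonoid.toList w2)

/-- The n-shuffle product `ш̄` on `H`, extended ℚ-bilinearly. -/
noncomputable def nsh (a b : H) : H :=
  Finsupp.sum a.coeff fun w1 c1 =>
    Finsupp.sum b.coeff fun w2 c2 =>
      (c1 * c2) • nshW (FreeMonoid.toList w1) (FreeMonoid.toList w2)

/-- `S₁`: the ℚ-algebra endomorphism of `H` with `S₁(x) = x`, `S₁(y) = x + y`. -/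
noncomputable def S1 : H →ₐ[ℚ] H :=
  MonoidAlgebra.lift ℚ H (FreeMonoid Letter)
    (FreeMonoid.lift fun u => match u with
      | Letter.x => X
      | Letter.y => X + Y)

/-- `S₂`: the ℚ-algebra endomorphism of `H` with `S₂(x) = x`, `S₂(y) = y − x`. -/
noncomputable def S2 : H →ₐ[ℚ] H :=
  MonoidAlgebra.lift ℚ H (FreeMonoid Letter)
    (FreeMonoid.lift fun u => match u with
      | Letter.x => X
      | Letter.y => Y - X)

/-- `S` on a word: `S(1) = 1` and `S(Fy) = S₁(F)y`. -/
noncomputable def SW (w : FreeMonoid Letter) : H :=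
  match (FreeMonoid.toList w).getLast? with
  | some Letter.y =>
      S1 (word (FreeMonoid.ofList (FreeMonoid.toList w).dropLast)) * Y
  | _ => word w

/-- The ℚ-linear map `S : H¹ → H¹` with `S(1) = 1`, `S(Fy) = S₁(F)y`. -/
noncomputable def S (a : H) : H := Finsupp.sum a.coeff fun w c => c • SW w

/-- `S̃` on a word: `S̃(1) = 1` and `S̃(Fy) = S₂(F)y`. -/
noncomputable def StW (w : FreeMonoid Letter) : H :=
  match (FreeMonoid.toList w).getLast? with
  | some Letter.y =>
      S2 (word (FreeMonoid.ofList (FreeMonoid.toList w).dropLast)) * Y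
  | _ => word w

/-- The ℚ-linear map `S̃ : H¹ → H¹` with `S̃(1) = 1`, `S̃(Fy) = S₂(F)y`. -/
noncomputable def St (a : H) : H := Finsupp.sum a.coeff fun w c => c • StW w

/-- The multiple zeta value `ζ(k₁,…,kₙ)`: the sum over strictly decreasing
tuples `m₁ > m₂ > ⋯ > mₙ > 0` of `1/(m₁^{k₁}⋯mₙ^{kₙ})`. -/
noncomputable def mzeta (ks : List ℕ) : ℝ :=
  ∑' m : {f : Fin ks.length → ℕ // (∀ i, 0 < f i) ∧
      ∀ i j : Fin ks.length, i < j → f j < f i},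
    ∏ i : Fin ks.length, ((m.1 i : ℝ) ^ ks.get i)⁻¹

/-- The non-strict multiple zeta value `ζ̄(k₁,…,kₙ)`: the sum over weakly
decreasing tuples `m₁ ≥ m₂ ≥ ⋯ ≥ mₙ > 0` of `1/(m₁^{k₁}⋯mₙ^{kₙ})`. -/
noncomputable def nmzeta (ks : List ℕ) : ℝ :=
  ∑' m : {f : Fin ks.length → ℕ // (∀ i, 0 < f i) ∧
      ∀ i j : Fin ks.length, i ≤ j → f j ≤ f i},
    ∏ i : Fin ks.length, ((m.1 i : ℝ) ^ ks.get i)⁻¹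

/-- The evaluation map `Z : H⁰ → ℝ`, `Z(1) = 1`,
`Z(z_{k₁}⋯z_{kₙ}) = ζ(k₁,…,kₙ)` (extended ℚ-linearly to `H`). -/
noncomputable def Z (a : H) : ℝ := Finsupp.sum a.coeff fun w c => (c : ℝ) * mzeta (toZ w)

/-- The n-evaluation map `Z̄ : H⁰ → ℝ`, `Z̄(1) = 1`,
`Z̄(z_{k₁}⋯z_{kₙ}) = ζ̄(k₁,…,kₙ)` (extended ℚ-linearly to `H`). -/
noncomputable def Zbar (a : H) : ℝ := Finsupp.sum a.coeff fun w c => (c : ℝ) * nmzeta (toZ w)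

/-- `i`-fold n-harmonic power: `a^{*̄ 0} = 1`, `a^{*̄ (i+1)} = a *̄ a^{*̄ i}`. -/
noncomputable def nharmPow : ℕ → H → H
  | 0, _ => 1
  | i + 1, a => nharm a (nharmPow i a)

/-- `i`-fold n-shuffle power: `a^{ш̄ 0} = 1`, `a^{ш̄ (i+1)} = a ш̄ a^{ш̄ i}`. -/
noncomputable def nshPow : ℕ → H → H
  | 0, _ => 1
  | i + 1, a => nsh a (nshPow i a)

end H

open H

/-!
Every nonempty word of `H¹` is `uF` with `F` a word of `H¹`, and `S(uF) = S₁(u) S(F) - δ(F) x`: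
the correction vanishes unless `uF = y`, where it turns `S₁(y) = x + y` into `S(y) = y`.
Since `S₁(u)` and `x` are linear forms in the letters, the shuffle recursion applies to a product of
two such expressions, and the correction terms become exactly the terms `- δ(F) τ(u)vG` and
`- δ(G) τ(v)uF` by which the recursion of `ш̄` differs from that of `ш`. Multiplicativity of `S`
follows by induction on the lengths of the two words. The inverse of `S` on `H¹` is `S̃`,
because `S₂` is inverse to `S₁`.
-/

namespace H

/-- The word `u₁⋯uₙ` of `H` given by the list of its letters, the form in which words enter the
recursions for `shW` and `nshW`. -/
noncomputable abbrev listWord (w : List Letter) : H := word (FreeMonoid.ofList w)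

theorem listWord_append (v w : List Letter) : listWord (v ++ w) = listWord v * listWord w := by
  simp [listWord, word, MonoidAlgebra.single_mul_single]

theorem listWord_cons (u : Letter) (w : List Letter) :
    listWord (u :: w) = word (FreeMonoid.of u) * listWord w :=
  listWord_append [u] w

/-- The `ℚ`-bilinear product on `H` extending a product given on words. -/
noncomputable def bilinExt (f : List Letter → List Letter → H) : H →ₗ[ℚ] H →ₗ[ℚ] H :=
  (MonoidAlgebra.basis (FreeMonoid Letter) ℚ).constr ℚ fun v =>
    (MonoidAlgebra.basis (FreeMonoid Letter) ℚ).constr ℚ fun w => f v.toList w.toList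

theorem bilinExt_apply (f : List Letter → List Letter → H) (a b : H) :
    bilinExt f a b =
      a.coeff.sum fun v c => b.coeff.sum fun w d => (c * d) • f v.toList w.toList := by
  simp only [bilinExt, Module.Basis.constr_apply, MonoidAlgebra.basis, Finsupp.sum,
    LinearMap.sum_apply, LinearMap.smul_apply, Finset.smul_sum, mul_smul]
  rfl

theorem bilinExt_shW (a b : H) : bilinExt shW a b = sh a b := bilinExt_apply shW a b

theorem bilinExt_nshW (a b : H) : bilinExt nshW a b = nsh a b := bilinExt_apply nshW a b

theorem bilinExt_listWord (f : List Letter → List Letter → H) (v w : List Letter) :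
    bilinExt f (listWord v) (listWord w) = f v w := by
  simp [bilinExt_apply, word]

theorem shW_nil_right (w : List Letter) : shW w [] = listWord w := by
  cases w <;> rw [shW]

theorem sh_one_left (a : H) : sh 1 a = a := by
  have eq_id : bilinExt shW 1 = LinearMap.id :=
    (MonoidAlgebra.basis (FreeMonoid Letter) ℚ).ext fun w =>
      (bilinExt_listWord shW [] w.toList).trans (by rw [shW]; rfl)
  rw [← bilinExt_shW, eq_id, LinearMap.id_apply]

theorem sh_one_right (a : H) : sh a 1 = a := by
  have eq_id : (bilinExt shW).flip 1 = LinearMap.id :=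
    (MonoidAlgebra.basis (FreeMonoid Letter) ℚ).ext fun w =>
      (bilinExt_listWord shW w.toList []).trans (shW_nil_right _)
  rw [← bilinExt_shW, ← LinearMap.flip_apply, eq_id, LinearMap.id_apply]

theorem sh_letter_mul_letter_mul (u v : Letter) (A B : H) :
    sh (word (FreeMonoid.of u) * A) (word (FreeMonoid.of v) * B) =
      word (FreeMonoid.of u) * sh A (word (FreeMonoid.of v) * B) +
        word (FreeMonoid.of v) * sh (word (FreeMonoid.of u) * A) B := by
  let mulU := LinearMap.mulLeft ℚ (word (FreeMonoid.of u))
  let mulV := LinearMap.mulLeft ℚ (word (FreeMonoid.of v))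
  have bilinear_eq : (bilinExt shW).compl₁₂ mulU mulV =
      ((bilinExt shW).compl₂ mulV).compr₂ mulU + (bilinExt shW ∘ₗ mulU).compr₂ mulV := by
    refine LinearMap.ext_basis (MonoidAlgebra.basis _ ℚ) (MonoidAlgebra.basis _ ℚ) fun F G => ?_
    change bilinExt shW (word _ * listWord F.toList) (word _ * listWord G.toList) =
      word _ * bilinExt shW (listWord F.toList) (word _ * listWord G.toList) +
        word _ * bilinExt shW (word _ * listWord F.toList) (listWord G.toList)
    simp only [← listWord_cons, bilinExt_listWord, shW]
  simp only [← bilinExt_shW]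
  exact LinearMap.congr_fun₂ bilinear_eq A B

theorem sh_mul_mul_of_mem_span {a b : H} (ha : a ∈ Submodule.span ℚ {X, Y})
    (hb : b ∈ Submodule.span ℚ {X, Y}) (A B : H) :
    sh (a * A) (b * B) = a * sh A (b * B) + b * sh (a * A) B := by
  obtain ⟨p, q, rfl⟩ := Submodule.mem_span_pair.1 ha
  obtain ⟨r, s, rfl⟩ := Submodule.mem_span_pair.1 hb
  have recursion := sh_letter_mul_letter_mul
  simp only [← bilinExt_shW] at recursion ⊢
  simp only [X, Y, add_mul, smul_mul_assoc, map_add, map_smul, LinearMap.add_apply,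
    LinearMap.smul_apply, recursion, mul_add, mul_smul_comm]
  module

theorem sh_mul_sub_mul_sub {a b c : H} (ha : a ∈ Submodule.span ℚ {X, Y})
    (hb : b ∈ Submodule.span ℚ {X, Y}) (hc : c ∈ Submodule.span ℚ {X, Y}) (p q : ℚ) (A B : H) :
    sh (a * A - p • c) (b * B - q • c) =
      a * sh A (b * B - q • c) + b * sh (a * A - p • c) B -
        p • (c * (b * B - q • c)) - q • (c * (a * A - p • c)) := by
  have sh_left : sh (a * A) c = a * sh A c + c * (a * A) := by
    simpa only [mul_one, sh_one_right] using sh_mul_mul_of_mem_span ha hc A 1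
  have sh_right : sh c (b * B) = c * (b * B) + b * sh c B := by
    simpa only [mul_one, sh_one_left] using sh_mul_mul_of_mem_span hc hb 1 B
  have sh_self : sh c c = c * c + c * c := by
    simpa only [mul_one, sh_one_left, sh_one_right] using sh_mul_mul_of_mem_span hc hc 1 1
  have sh_both := sh_mul_mul_of_mem_span ha hb A B
  simp only [← bilinExt_shW] at sh_left sh_right sh_self sh_both ⊢
  simp only [map_sub, map_smul, LinearMap.sub_apply, LinearMap.smul_apply, sh_left, sh_right,
    sh_self, sh_both, mul_sub, mul_smul_comm]
  module

/-- The common form of `S` and `S̃`: the linear map with `1 ↦ 1` and `Fy ↦ φ(F)y`. As for these two,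
words ending in `x` are left unchanged. -/
noncomputable def mapInit (φ : H →ₐ[ℚ] H) : H →ₗ[ℚ] H :=
  (MonoidAlgebra.basis (FreeMonoid Letter) ℚ).constr ℚ fun w =>
    match w.toList.getLast? with
    | some Letter.y => φ (listWord w.toList.dropLast) * Y
    | _ => word w

theorem mapInit_S1 (a : H) : mapInit S1 a = S a :=
  Module.Basis.constr_apply ..

theorem mapInit_one (φ : H →ₐ[ℚ] H) : mapInit φ 1 = 1 :=
  Module.Basis.constr_basis _ ℚ _ (1 : FreeMonoid Letter)

theorem mapInit_mul_Y (φ : H →ₐ[ℚ] H) (F : H) : mapInit φ (F * Y) = φ F * Y := by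
  have linear_eq : mapInit φ ∘ₗ LinearMap.mulRight ℚ Y =
      LinearMap.mulRight ℚ Y ∘ₗ φ.toLinearMap := by
    refine (MonoidAlgebra.basis (FreeMonoid Letter) ℚ).ext fun w => ?_
    change mapInit φ (listWord w.toList * listWord [Letter.y]) = φ (listWord w.toList) * Y
    rw [← listWord_append]
    refine (Module.Basis.constr_basis _ ℚ _ (FreeMonoid.ofList (w.toList ++ [Letter.y]))).trans ?_
    simp
  exact LinearMap.congr_fun linear_eq F

/-- The left ideal `Hy` of `H`, as a `ℚ`-submodule. -/
noncomputable abbrev Hy : Submodule ℚ H := LinearMap.range (LinearMap.mulRight ℚ Y)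

theorem mul_mem_Hy (b : H) {a : H} (ha : a ∈ Hy) : b * a ∈ Hy := by
  obtain ⟨F, rfl⟩ := ha
  exact ⟨b * F, mul_assoc b F Y⟩

theorem mapInit_mul_of_mem_Hy (φ : H →ₐ[ℚ] H) (b : H) {a : H} (ha : a ∈ Hy) :
    mapInit φ (b * a) = φ b * mapInit φ a := by
  obtain ⟨F, rfl⟩ := ha
  rw [LinearMap.mulRight_apply, ← mul_assoc, mapInit_mul_Y, mapInit_mul_Y, map_mul, mul_assoc]

theorem mem_H1_iff {a : H} : a ∈ H1 ↔ ∃ (F : H) (c : ℚ), F * Y + c • (1 : H) = a := by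
  simp [H1, Submodule.mem_sup, Submodule.mem_span_singleton]

theorem mapInit_mul_Y_add_smul_one (φ : H →ₐ[ℚ] H) (F : H) (c : ℚ) :
    mapInit φ (F * Y + c • (1 : H)) = φ F * Y + c • (1 : H) := by
  rw [map_add, map_smul, mapInit_mul_Y, mapInit_one]

theorem mapsTo_mapInit_H1 (φ : H →ₐ[ℚ] H) : Set.MapsTo (mapInit φ) H1 H1 := by
  intro a ha
  obtain ⟨F, c, rfl⟩ := mem_H1_iff.1 ha
  exact mem_H1_iff.2 ⟨φ F, c, (mapInit_mul_Y_add_smul_one φ F c).symm⟩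

theorem leftInvOn_mapInit_H1 {φ ψ : H →ₐ[ℚ] H} (h : Function.LeftInverse ψ φ) :
    Set.LeftInvOn (mapInit ψ) (mapInit φ) H1 := by
  intro a ha
  obtain ⟨F, c, rfl⟩ := mem_H1_iff.1 ha
  rw [mapInit_mul_Y_add_smul_one, mapInit_mul_Y_add_smul_one, h F]

theorem S1_X : S1 X = X := by simp [S1, X, word]

theorem S1_Y : S1 Y = X + Y := by simp [S1, Y, word]

theorem S2_X : S2 X = X := by simp [S2, X, word]

theorem S2_Y : S2 Y = Y - X := by simp [S2, Y, word]

theorem algHom_ext_X_Y {A : Type*} [Semiring A] [Algebra ℚ A] {φ ψ : H →ₐ[ℚ] A}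
    (hX : φ X = ψ X) (hY : φ Y = ψ Y) : φ = ψ := by
  refine (MonoidAlgebra.lift ℚ A (FreeMonoid Letter)).symm.injective (FreeMonoid.hom_eq fun u => ?_)
  cases u
  · exact hX
  · exact hY

theorem leftInverse_S2_S1 : Function.LeftInverse S2 S1 :=
  DFunLike.congr_fun <| algHom_ext_X_Y (φ := S2.comp S1) (ψ := AlgHom.id ℚ H)
    (by simp [S1_X, S2_X]) (by simp [S1_Y, S2_X, S2_Y])

theorem leftInverse_S1_S2 : Function.LeftInverse S1 S2 :=
  DFunLike.congr_fun <| algHom_ext_X_Y (φ := S1.comp S2) (ψ := AlgHom.id ℚ H)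
    (by simp [S1_X, S2_X]) (by simp [S1_X, S1_Y, S2_Y])

theorem bijOn_S_H1 : Set.BijOn S H1 H1 := by
  rw [← funext mapInit_S1]
  exact Set.InvOn.bijOn
    ⟨leftInvOn_mapInit_H1 leftInverse_S2_S1, leftInvOn_mapInit_H1 leftInverse_S1_S2⟩
    (mapsTo_mapInit_H1 S1) (mapsTo_mapInit_H1 S2)

theorem S1_letter_mem_span (u : Letter) :
    S1 (word (FreeMonoid.of u)) ∈ Submodule.span ℚ {X, Y} := by
  cases u
  · change S1 X ∈ _
    exact S1_X.symm ▸ Submodule.mem_span_of_mem (by simp)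
  · change S1 Y ∈ _
    exact S1_Y.symm ▸ Submodule.mem_span_pair.2 ⟨1, 1, by simp⟩

/-- The words of `H¹`, namely the empty word and the words ending in `y`. -/
def IsH1Word (w : List Letter) : Prop := w.getLast? ≠ some Letter.x

theorem IsH1Word.of_cons {u : Letter} {w : List Letter} (h : IsH1Word (u :: w)) : IsH1Word w := by
  cases w <;> simp_all [IsH1Word]

theorem isH1Word_singleton_iff {u : Letter} : IsH1Word [u] ↔ u = Letter.y := by
  cases u <;> simp [IsH1Word]

theorem H1_le_span_listWord : H1 ≤ Submodule.span ℚ (listWord '' {w | IsH1Word w}) := by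
  refine sup_le ?_ ?_
  · rw [LinearMap.range_eq_map, ← (MonoidAlgebra.basis (FreeMonoid Letter) ℚ).span_eq,
      Submodule.map_span, Submodule.span_le]
    rintro _ ⟨_, ⟨w, rfl⟩, rfl⟩
    exact Submodule.subset_span
      ⟨w.toList ++ [Letter.y], by simp [IsH1Word], listWord_append w.toList [Letter.y]⟩
  · rw [Submodule.span_singleton_le_iff_mem]
    exact Submodule.subset_span ⟨[], by simp [IsH1Word], rfl⟩

theorem listWord_cons_mem_Hy {u : Letter} {w : List Letter} (h : IsH1Word (u :: w)) :
    listWord (u :: w) ∈ Hy := by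
  induction w generalizing u with
  | nil =>
    obtain rfl := isH1Word_singleton_iff.1 h
    exact ⟨1, one_mul Y⟩
  | cons v w ih =>
    rw [listWord_cons]
    exact mul_mem_Hy _ (ih h.of_cons)

theorem δ_smul_letter_τ {u : Letter} {w : List Letter} (h : IsH1Word (u :: w)) :
    δ w • word (FreeMonoid.of (τ u)) = δ w • X := by
  cases w with
  | nil =>
    obtain rfl := isH1Word_singleton_iff.1 h
    rfl
  | cons v w => simp only [δ, zero_smul]

theorem nshW_cons_cons_of_isH1Word {u v : Letter} {F G : List Letter} (hF : IsH1Word (u :: F))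
    (hG : IsH1Word (v :: G)) :
    nshW (u :: F) (v :: G) =
      word (FreeMonoid.of u) * nshW F (v :: G) + word (FreeMonoid.of v) * nshW (u :: F) G -
        δ F • (X * listWord (v :: G)) - δ G • (X * listWord (u :: F)) := by
  rw [nshW]
  change _ - δ F • listWord (τ u :: v :: G) - δ G • listWord (τ v :: u :: F) = _
  rw [listWord_cons (τ u), listWord_cons (τ v), ← smul_mul_assoc, ← smul_mul_assoc,
    δ_smul_letter_τ hF, δ_smul_letter_τ hG, smul_mul_assoc, smul_mul_assoc]

theorem nshW_mem_Hy : ∀ {F G : List Letter}, IsH1Word F → IsH1Word G → (F ≠ [] ∨ G ≠ []) →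
    nshW F G ∈ Hy
  | [], [], _, _, hne => by simp at hne
  | [], v :: G, _, hG, _ => by
    rw [nshW]
    exact listWord_cons_mem_Hy hG
  | u :: F, [], hF, _, _ => by
    rw [nshW]
    exact listWord_cons_mem_Hy hF
  | u :: F, v :: G, hF, hG, _ => by
    have left_mem : nshW F (v :: G) ∈ Hy := nshW_mem_Hy hF.of_cons hG (by simp)
    have right_mem : nshW (u :: F) G ∈ Hy := nshW_mem_Hy hF hG.of_cons (by simp)
    have uF_mem := listWord_cons_mem_Hy hF
    have vG_mem := listWord_cons_mem_Hy hG
    rw [nshW_cons_cons_of_isH1Word hF hG]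
    exact Hy.sub_mem
      (Hy.sub_mem (Hy.add_mem (mul_mem_Hy _ left_mem) (mul_mem_Hy _ right_mem))
        (Hy.smul_mem _ (mul_mem_Hy _ vG_mem)))
      (Hy.smul_mem _ (mul_mem_Hy _ uF_mem))
termination_by F G => F.length + G.length

theorem mapInit_S1_listWord_cons {u : Letter} {w : List Letter} (h : IsH1Word (u :: w)) :
    mapInit S1 (listWord (u :: w)) =
      S1 (word (FreeMonoid.of u)) * mapInit S1 (listWord w) - δ w • X := by
  cases w with
  | nil =>
    obtain rfl := isH1Word_singleton_iff.1 h
    have map_Y : mapInit S1 Y = Y := by simpa using mapInit_mul_Y S1 1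
    change mapInit S1 Y = S1 Y * mapInit S1 1 - (1 : ℚ) • X
    rw [map_Y, S1_Y, mapInit_one, mul_one, one_smul, add_sub_cancel_left]
  | cons v w =>
    rw [listWord_cons, mapInit_mul_of_mem_Hy S1 _ (listWord_cons_mem_Hy h.of_cons),
      δ, zero_smul, sub_zero]

theorem mapInit_S1_nshW : ∀ {F G : List Letter}, IsH1Word F → IsH1Word G →
    mapInit S1 (nshW F G) = sh (mapInit S1 (listWord F)) (mapInit S1 (listWord G))
  | [], G, _, _ => by
    change _ = sh (mapInit S1 1) _
    rw [nshW, mapInit_one, sh_one_left]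
  | u :: F, [], _, _ => by
    change _ = sh _ (mapInit S1 1)
    rw [nshW, mapInit_one, sh_one_right]
  | u :: F, v :: G, hF, hG => by
    have left_mem : nshW F (v :: G) ∈ Hy := nshW_mem_Hy hF.of_cons hG (by simp)
    have right_mem : nshW (u :: F) G ∈ Hy := nshW_mem_Hy hF hG.of_cons (by simp)
    have uF_mem := listWord_cons_mem_Hy hF
    have vG_mem := listWord_cons_mem_Hy hG
    have X_mem : X ∈ Submodule.span ℚ {X, Y} := Submodule.mem_span_of_mem (by simp)
    rw [nshW_cons_cons_of_isH1Word hF hG, map_sub, map_sub, map_add, map_smul, map_smul,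
      mapInit_mul_of_mem_Hy S1 _ left_mem, mapInit_mul_of_mem_Hy S1 _ right_mem,
      mapInit_mul_of_mem_Hy S1 _ uF_mem, mapInit_mul_of_mem_Hy S1 _ vG_mem,
      mapInit_S1_nshW hF.of_cons hG, mapInit_S1_nshW hF hG.of_cons, S1_X,
      mapInit_S1_listWord_cons hF, mapInit_S1_listWord_cons hG,
      sh_mul_sub_mul_sub (S1_letter_mem_span u) (S1_letter_mem_span v) X_mem]
termination_by F G => F.length + G.length

theorem S_nsh {a b : H} (ha : a ∈ H1) (hb : b ∈ H1) : S (nsh a b) = sh (S a) (S b) := by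
  simp only [← mapInit_S1, ← bilinExt_shW, ← bilinExt_nshW]
  replace ha := H1_le_span_listWord ha
  replace hb := H1_le_span_listWord hb
  induction ha, hb using Submodule.span_induction₂ with
  | mem_mem _ _ hF hG =>
    obtain ⟨F, hF, rfl⟩ := hF
    obtain ⟨G, hG, rfl⟩ := hG
    rw [bilinExt_listWord, mapInit_S1_nshW hF hG, bilinExt_shW]
  | zero_left | zero_right => simp
  | add_left | add_right | smul_left | smul_right => simp_all

end H

/-- `S(w₁ ш̄ w₂) = S(w₁) ш S(w₂)` for all `w₁, w₂ ∈ H¹`; together with the fact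
that `S` maps `H¹` bijectively onto `H¹` (it is ℚ-linear by construction),
this says `S` is a ℚ-algebra isomorphism from `(H¹, ш̄)` to `(H¹, ш)`. -/
theorem S_nsh_to_sh :
    (∀ w1 ∈ H1, ∀ w2 ∈ H1, S (nsh w1 w2) = sh (S w1) (S w2)) ∧
    Set.BijOn S (H1 : Set H) (H1 : Set H) := by
  exact ⟨fun _ h1 _ h2 => S_nsh h1 h2, bijOn_S_H1⟩
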